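/- Let (E, ∇) be a flat connection on the n-dimensional local field F_n = k((t₁))...((t_n)), char k = 0. Then for every i, the de Rham cohomology group H^i_∇(E) of the complex E → E ⊗ Ω¹ → ... → E ⊗ Ω^n is a finite-dimensional k-vector space. -/

import Mathlib

universe u v

/-- Coefficientwise extension of a zero-preserving map `F → F` to Laurent series `F((t))`. -/
noncomputable def coeffExt {F : Type u} [Zero F] (d : F → F) (hd : d 0 = 0)
    (y : LaurentSeries F) : LaurentSeries F where
  coeff g := d (y.coeff g)
  isPWO_support' := y.isPWO_support'.mono (fun g hg => by
    simp only [Function.mem_support] at hg ⊢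
    intro h
    exact hg (by rw [h, hd]))

/-- The tower of iterated Laurent series fields `F₀ = k`, `F_{n+1} = F_n((t))`, bundled with
its field structure, its `k`-algebra structure, the `n` partial derivatives
`∂/∂t₁, …, ∂/∂t_n` (the last one is the Laurent-series derivative in the outermost variable,
the others are extended coefficientwise), and the iterated residue map (the coefficient of
`t₁⁻¹⋯t_n⁻¹`). -/
noncomputable def FnPkg (k : Type u) [Field k] :
    (n : ℕ) → Σ' (T : Type u) (_ : Field T) (_ : Algebra k T),
      (Fin n → {f : T → T // f 0 = 0}) × (T → k)
  | 0 => ⟨k, inferInstance, Algebra.id k, Fin.elim0, id⟩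
  | n + 1 =>
    let p := FnPkg k n
    letI := p.2.1
    letI := p.2.2.1
    ⟨LaurentSeries p.1, inferInstance, inferInstance,
      fun i => Fin.lastCases
        ⟨fun y => LaurentSeries.derivative p.1 (V := p.1) y, map_zero _⟩
        (fun j => ⟨coeffExt (p.2.2.2.1 j).1 (p.2.2.2.1 j).2, by
          ext g
          exact (p.2.2.2.1 j).2⟩) i,
      fun y => p.2.2.2.2 (y.coeff (-1))⟩

/-- The `n`-fold iterated Laurent series field `F_n = k((t₁))⋯((t_n))`. -/
noncomputable def Fn (k : Type u) [Field k] (n : ℕ) : Type u := (FnPkg k n).1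

noncomputable instance Fn.instField (k : Type u) [Field k] (n : ℕ) : Field (Fn k n) :=
  (FnPkg k n).2.1

noncomputable instance Fn.instAlgebra (k : Type u) [Field k] (n : ℕ) : Algebra k (Fn k n) :=
  (FnPkg k n).2.2.1

/-- The partial derivative `∂/∂tᵢ` on `F_n = k((t₁))⋯((t_n))`. -/
noncomputable def pder (k : Type u) [Field k] (n : ℕ) (i : Fin n) : Fn k n → Fn k n :=
  ((FnPkg k n).2.2.2.1 i).1

/-- The iterated residue `Res : F_n → k`, the coefficient of `t₁⁻¹⋯t_n⁻¹`. -/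
noncomputable def resFn (k : Type u) [Field k] (n : ℕ) : Fn k n → k :=
  (FnPkg k n).2.2.2.2

/-- The degree-`p` piece of the formal de Rham complex of a flat connection
`(E, (∇₁, …, ∇_n))` on `F_n`: `E ⊗ Ω^p` is identified with functions from the set of
`p`-element subsets of `{1, …, n}` (indexing the basis `dt_{i₁} ∧ ⋯ ∧ dt_{i_p}`) to `E`. -/
abbrev deRhamPiece (n : ℕ) (E : Type v) (p : ℕ) : Type v :=
  {M : Finset (Fin n) // M.card = p} → E

/-- The de Rham differential `E ⊗ Ω^p → E ⊗ Ω^{p+1}` of the connection `(∇₁, …, ∇_n)`,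
with the usual alternating signs. -/
noncomputable def deRhamD (k : Type u) [Field k] (n : ℕ) (E : Type v) [AddCommGroup E]
    [Module k E] (Dop : Fin n → (E →ₗ[k] E)) (p : ℕ) :
    deRhamPiece n E p →ₗ[k] deRhamPiece n E (p + 1) where
  toFun φ N := ∑ i ∈ N.1.attach,
    ((-1 : ℤ) ^ (N.1.filter (fun j => j < i.1)).card) •
      Dop i.1 (φ ⟨N.1.erase i.1, by simp [Finset.card_erase_of_mem i.2, N.2]⟩)
  map_add' φ ψ := by
    funext N
    simp only [Pi.add_apply, map_add, smul_add]
    exact Finset.sum_add_distrib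
  map_smul' r φ := by
    funext N
    simp only [RingHom.id_apply, Pi.smul_apply, map_smul]
    rw [Finset.smul_sum]
    exact Finset.sum_congr rfl fun i _ => (smul_comm _ _ _)

/-!
The proof is by induction on `n`. Over `F((t))`, the operator `∇ₜ` is linear over the constants `F`
and has finite-dimensional kernel and cokernel over `F`. For the kernel, horizontal vectors that are
independent over `F` stay independent over `F((t))`. For the cokernel, a relation
`∑ bᵢ ∇ₜⁱ e = 0` shows, integrating by parts, that `L f • e` lies in the range of `∇ₜ` for every
`f`, where `L f = ∑ (-1)ⁱ (bᵢ f)⁽ⁱ⁾` is the formal adjoint. To leading order `L` multiplies `t ^ j`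
by a shift of `t` and a nonzero polynomial in `j`, the indicial polynomial; it has finitely many
integer roots, so by completeness `L` has finite-dimensional cokernel.

The remaining `∇ᵢ` act on the kernel and the cokernel of `∇ₜ` as flat connections in one variable
less. The de Rham complex being the mapping cone of `∇ₜ`, its cohomology is finite-dimensional
because those of the kernel and of the cokernel are.
-/

section Filtration

open HahnSeries
open scoped LaurentSeries

variable {R : Type*} [Ring R]

/-- The order filtration `t ^ n R⟦t⟧` of `R((t))`, by the Laurent series of order at least `n`. -/
def orderFiltration (R : Type*) [Ring R] (n : ℤ) : Submodule R R⸨X⸩ where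
  carrier := {x | ∀ m < n, x.coeff m = 0}
  add_mem' hx hy m hm := by rw [coeff_add, hx m hm, hy m hm, add_zero]
  zero_mem' _ _ := rfl
  smul_mem' r x hx m hm := by rw [coeff_smul, hx m hm, smul_zero]

theorem mem_orderFiltration {n : ℤ} {x : R⸨X⸩} :
    x ∈ orderFiltration R n ↔ ∀ m < n, x.coeff m = 0 := Iff.rfl

theorem mem_orderFiltration_iff_le_orderTop {n : ℤ} {x : R⸨X⸩} :
    x ∈ orderFiltration R n ↔ (n : WithTop ℤ) ≤ x.orderTop := by
  simp only [mem_orderFiltration, le_orderTop_iff_forall, WithTop.coe_lt_coe]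

theorem mem_orderFiltration_order (x : R⸨X⸩) : x ∈ orderFiltration R x.order :=
  fun _ hm => coeff_eq_zero_of_lt_order hm

theorem single_mem_orderFiltration (n : ℤ) (a : R) : single n a ∈ orderFiltration R n :=
  fun _ hm => coeff_single_of_ne hm.ne

theorem mem_orderFiltration_add_one_iff {n : ℤ} {x : R⸨X⸩} :
    x ∈ orderFiltration R (n + 1) ↔ x ∈ orderFiltration R n ∧ x.coeff n = 0 := by
  simp only [mem_orderFiltration, Int.lt_add_one_iff, le_iff_lt_or_eq, or_imp, forall_and,
    forall_eq]

theorem orderFiltration_antitone : Antitone (orderFiltration R) :=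
  fun _ _ h _ hx _ hm => hx _ (hm.trans_le h)

theorem sub_single_mem_orderFiltration_add_one {n : ℤ} {x : R⸨X⸩} (hx : x ∈ orderFiltration R n) :
    x - single n (x.coeff n) ∈ orderFiltration R (n + 1) :=
  mem_orderFiltration_add_one_iff.2
    ⟨sub_mem hx (single_mem_orderFiltration n _), by
      simp only [coeff_sub, coeff_single_same, sub_self]⟩

theorem mul_mem_orderFiltration {a b : ℤ} {x y : R⸨X⸩} (hx : x ∈ orderFiltration R a)
    (hy : y ∈ orderFiltration R b) : x * y ∈ orderFiltration R (a + b) := by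
  rw [mem_orderFiltration_iff_le_orderTop] at hx hy ⊢
  exact (add_le_add hx hy).trans orderTop_add_le_mul

theorem coeff_mul_of_mem_orderFiltration {a b : ℤ} {x y : R⸨X⸩} (hx : x ∈ orderFiltration R a)
    (hy : y ∈ orderFiltration R b) : (x * y).coeff (a + b) = x.coeff a * y.coeff b := by
  have htail := mul_mem_orderFiltration (sub_single_mem_orderFiltration_add_one hx) hy (a + b)
    (by lia)
  rwa [sub_mul, coeff_sub, add_comm a b, coeff_single_mul_add, sub_eq_zero, add_comm b a] at htail

/-- Completeness of `R((t))` for the order filtration. -/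
theorem exists_sub_mem_orderFiltration {N : ℤ} {Y : ℕ → R⸨X⸩}
    (hY : ∀ j : ℕ, Y (j + 1) - Y j ∈ orderFiltration R (N + j)) :
    ∃ y, ∀ j : ℕ, y - Y j ∈ orderFiltration R (N + j) := by
  have hstable (i j : ℕ) (hij : i ≤ j) : Y j - Y i ∈ orderFiltration R (N + i) := by
    induction j, hij using Nat.le_induction with
    | base => simp only [sub_self, zero_mem]
    | succ j hij ih =>
      rw [← sub_add_sub_cancel (Y (j + 1)) (Y j)]
      exact add_mem (orderFiltration_antitone (by lia) (hY j)) ih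
  let limitCoeff : ℤ → R := fun m => (Y ((m - N).toNat + 1)).coeff m
  have hlimit (m : ℤ) (j : ℕ) (hm : m < N + j) : limitCoeff m = (Y j).coeff m := by
    rcases le_total ((m - N).toNat + 1) j with h | h
    · exact (sub_eq_zero.1 (hstable _ _ h m (by lia))).symm
    · exact sub_eq_zero.1 (hstable _ _ h m hm)
  have hbdd : BddBelow (Function.support limitCoeff) := by
    refine ⟨min N (Y 0).order, fun m hm => ?_⟩
    by_contra! hlt
    obtain ⟨hmN, hmY⟩ := lt_min_iff.1 hlt
    exact hm ((hlimit m 0 (by simpa using hmN)).trans (coeff_eq_zero_of_lt_order hmY))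
  exact ⟨ofSuppBddBelow limitCoeff hbdd, fun j m hm => sub_eq_zero.2 (hlimit m j hm)⟩

end Filtration

section IndicialFunction

open HahnSeries
open scoped LaurentSeries

variable {F : Type*} [Field F]

/-- `T` shifts the order filtration by `c` and acts on leading coefficients as
`t ^ n ↦ q n • t ^ (n + c) + ⋯`; for a differential operator, `q` is its indicial polynomial. -/
structure HasIndicialFunction (T : F⸨X⸩ →ₗ[F] F⸨X⸩) (c : ℤ) (q : ℤ → F) : Prop where
  map_mem : ∀ n, ∀ y ∈ orderFiltration F n, T y ∈ orderFiltration F (n + c)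
  coeff_map : ∀ n, ∀ y ∈ orderFiltration F n, (T y).coeff (n + c) = q n * y.coeff n

namespace HasIndicialFunction

variable {T : F⸨X⸩ →ₗ[F] F⸨X⸩} {c : ℤ} {q : ℤ → F}

theorem sub_map_single_mem (hT : HasIndicialFunction T c q) {n : ℤ} (hn : q n ≠ 0) {z : F⸨X⸩}
    (hz : z ∈ orderFiltration F (n + c)) :
    z - T (single n (z.coeff (n + c) / q n)) ∈ orderFiltration F (n + c + 1) := by
  have hs := single_mem_orderFiltration n (z.coeff (n + c) / q n)
  refine mem_orderFiltration_add_one_iff.2 ⟨sub_mem hz (hT.map_mem n _ hs), ?_⟩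
  rw [coeff_sub, hT.coeff_map n _ hs, coeff_single_same, mul_div_cancel₀ _ hn, sub_self]

theorem orderFiltration_le_range (hT : HasIndicialFunction T c q) {N : ℤ}
    (hN : ∀ n, N ≤ n → q n ≠ 0) : orderFiltration F (N + c) ≤ LinearMap.range T := by
  intro z hz
  let correction (j : ℕ) (w : F⸨X⸩) : F⸨X⸩ := single (N + j) (w.coeff (N + j + c) / q (N + j))
  let Y : ℕ → F⸨X⸩ := fun j => Nat.rec 0 (fun j y => y + correction j (z - T y)) j
  have hY (j : ℕ) : z - T (Y j) ∈ orderFiltration F (N + j + c) := by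
    induction j with
    | zero => simpa [Y] using hz
    | succ j ih =>
      have hstep := hT.sub_map_single_mem (hN (N + j) (by lia)) ih
      rw [sub_sub, ← map_add] at hstep
      convert hstep using 1
      push_cast
      ring_nf
  obtain ⟨y, hy⟩ := exists_sub_mem_orderFiltration (Y := Y) (N := N) fun j => by
    simpa only [Y, add_sub_cancel_left] using single_mem_orderFiltration _ _
  refine ⟨y, (sub_eq_zero.1 ?_).symm⟩
  ext m
  let j := (m - N - c).toNat + 1
  have hrem : z - T y ∈ orderFiltration F (N + j + c) := by
    rw [← sub_sub_sub_cancel_right z (T y) (T (Y j)), ← map_sub]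
    exact sub_mem (hY j) (hT.map_mem _ _ (hy j))
  exact hrem m (by lia)

theorem orderFiltration_le_of_add_one (hT : HasIndicialFunction T c q) {P : Submodule F F⸨X⸩}
    (hP : LinearMap.range T ≤ P) {n : ℤ} (hn : q n = 0 → single (n + c) 1 ∈ P)
    (h : orderFiltration F (n + c + 1) ≤ P) : orderFiltration F (n + c) ≤ P := by
  intro z hz
  by_cases hqn : q n = 0
  · rw [← sub_add_cancel z (single (n + c) (z.coeff (n + c)))]
    refine add_mem (h (sub_single_mem_orderFiltration_add_one hz)) ?_
    simpa only [← C_mul_eq_smul, C_apply, single_mul_single, zero_add, mul_one] using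
      P.smul_mem (z.coeff (n + c)) (hn hqn)
  · rw [← sub_add_cancel z (T (single n (z.coeff (n + c) / q n)))]
    exact add_mem (h (hT.sub_map_single_mem hqn hz)) (hP (LinearMap.mem_range_self T _))

theorem cofg_range (hT : HasIndicialFunction T c q) (hq : {n | q n = 0}.Finite) :
    (LinearMap.range T).CoFG := by
  let V := Submodule.span F ((fun n => single (n + c) (1 : F)) '' {n | q n = 0})
  obtain ⟨B, hB⟩ := hq.bddAbove
  have hle_range : orderFiltration F (B + 1 + c) ≤ LinearMap.range T :=
    hT.orderFiltration_le_range fun n hn h => by have := hB h; lia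
  have hle (n : ℤ) : orderFiltration F (n + c) ≤ LinearMap.range T ⊔ V := by
    rcases le_total (B + 1) n with h | h
    · exact ((orderFiltration_antitone (by lia)).trans hle_range).trans le_sup_left
    · induction n, h using Int.leInductionDown with
      | base => exact hle_range.trans le_sup_left
      | pred n _ ih =>
        refine hT.orderFiltration_le_of_add_one le_sup_left (fun hn => ?_) ?_
        · exact Submodule.mem_sup_right (Submodule.subset_span ⟨n - 1, hn, rfl⟩)
        · rwa [add_right_comm, sub_add_cancel]
  have htop : LinearMap.range T ⊔ V = ⊤ := eq_top_iff.2 fun z _ =>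
    hle (z.order - c) (by rw [sub_add_cancel]; exact mem_orderFiltration_order z)
  refine Module.finite_def.2 ?_
  rw [← (Submodule.map_mkQ_eq_top _ V).2 htop]
  exact (Submodule.fg_span (hq.image _)).map _

end HasIndicialFunction

end IndicialFunction

section FormalAdjoint

open HahnSeries
open scoped LaurentSeries Polynomial

theorem derivative_pow_coeff_eq_eval_ascPochhammer {R : Type*} [CommRing R] (i : ℕ)
    (y : R⸨X⸩) (m : ℤ) :
    ((LaurentSeries.derivative R ^ i) y).coeff m =
      (ascPochhammer R i).eval (m + 1 : R) * y.coeff (m + i) := by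
  have hcast : (((ascPochhammer ℤ i).eval (m + 1) : ℤ) : R) =
      (ascPochhammer R i).eval (m + 1 : R) := by
    rw [← ascPochhammer_map (Int.castRingHom R)]
    exact_mod_cast (Polynomial.eval_intCast_map (Int.castRingHom R) _ (m + 1)).symm
  rw [Module.End.pow_apply, LaurentSeries.derivative_iterate_coeff,
    Polynomial.descPochhammer_smeval_eq_ascPochhammer, add_sub_cancel_right,
    Polynomial.ascPochhammer_smeval_eq_eval, zsmul_eq_mul, hcast]

variable {F : Type*} [Field F]

/-- The formal adjoint `y ↦ ∑ (-1) ^ i ∂ ^ i (b i * y)` of the differential operator `∑ b i ∂ ^ i`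
on `F((t))`. -/
noncomputable def formalAdjoint (b : ℕ →₀ F⸨X⸩) : F⸨X⸩ →ₗ[F] F⸨X⸩ where
  toFun y := b.sum fun i f => (-1 : ℤ) ^ i • (LaurentSeries.derivative F ^ i) (f * y)
  map_add' y z := by
    simp only [mul_add, map_add, smul_add, Finsupp.sum_add]
  map_smul' r y := by
    simp only [← C_mul_eq_smul (r := r), mul_left_comm _ (C r), RingHom.id_apply]
    simp only [C_mul_eq_smul, map_smul, Finsupp.smul_sum, smul_comm r]

theorem formalAdjoint_apply (b : ℕ →₀ F⸨X⸩) (y : F⸨X⸩) : formalAdjoint b y =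
    b.sum fun i f => (-1 : ℤ) ^ i • (LaurentSeries.derivative F ^ i) (f * y) := rfl

/-- The indicial polynomial of `formalAdjoint b` for the shift `c`, as a function of the degree
after the shift plus one. -/
noncomputable def indicialPolynomial (b : ℕ →₀ F⸨X⸩) (c : ℤ) : F[X] :=
  b.sum fun i f => ((-1) ^ i * f.coeff (c + i)) • ascPochhammer F i

theorem linearIndependent_ascPochhammer : LinearIndependent F (ascPochhammer F) := by
  let S : Polynomial.Sequence F := ⟨ascPochhammer F, fun i => by
    rw [Polynomial.degree_eq_natDegree (monic_ascPochhammer F i).ne_zero, ascPochhammer_natDegree]⟩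
  exact S.linearIndependent

theorem indicialPolynomial_ne_zero {b : ℕ →₀ F⸨X⸩} {c : ℤ} {i : ℕ} (hi : (b i).coeff (c + i) ≠ 0) :
    indicialPolynomial b c ≠ 0 := by
  intro h
  have hmem : i ∈ b.support := Finsupp.mem_support_iff.2 fun h0 => hi (by rw [h0, coeff_zero])
  have hcoeff := linearIndependent_iff'.1 linearIndependent_ascPochhammer _ _ h i hmem
  exact hi ((mul_eq_zero.1 hcoeff).resolve_left (pow_ne_zero _ (neg_ne_zero.2 one_ne_zero)))

theorem hasIndicialFunction_formalAdjoint {b : ℕ →₀ F⸨X⸩} {c : ℤ}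
    (hb : ∀ i : ℕ, b i ∈ orderFiltration F (c + i)) :
    HasIndicialFunction (formalAdjoint b) c
      fun n => (indicialPolynomial b c).eval ((n + c : ℤ) + 1 : F) where
  map_mem n y hy m hm := by
    rw [formalAdjoint_apply, Finsupp.sum, coeff_sum]
    refine Finset.sum_eq_zero fun i _ => ?_
    rw [coeff_smul, derivative_pow_coeff_eq_eval_ascPochhammer,
      mul_mem_orderFiltration (hb i) hy (m + i) (by lia), mul_zero, smul_zero]
  coeff_map n y hy := by
    rw [formalAdjoint_apply, Finsupp.sum, coeff_sum, indicialPolynomial, Finsupp.sum,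
      Polynomial.eval_finsetSum, Finset.sum_mul]
    refine Finset.sum_congr rfl fun i _ => ?_
    have hcoeff : (b i * y).coeff (n + c + i) = (b i).coeff (c + i) * y.coeff n := by
      rw [← coeff_mul_of_mem_orderFiltration (hb i) hy]
      congr 1
      ring
    rw [coeff_smul, derivative_pow_coeff_eq_eval_ascPochhammer, hcoeff, Polynomial.eval_smul]
    simp only [zsmul_eq_mul, smul_eq_mul]
    push_cast
    ring

theorem exists_forall_mem_orderFiltration_and_coeff_ne_zero {b : ℕ →₀ F⸨X⸩} (hb : b ≠ 0) :
    ∃ c : ℤ, (∀ i : ℕ, b i ∈ orderFiltration F (c + i)) ∧ ∃ i, (b i).coeff (c + i) ≠ 0 := by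
  obtain ⟨i, hi, hmin⟩ := b.support.exists_min_image (fun i => (b i).order - (i : ℤ))
    (Finsupp.support_nonempty_iff.2 hb)
  refine ⟨(b i).order - i, fun j => ?_, i, ?_⟩
  · by_cases hj : b j = 0
    · rw [hj]
      exact zero_mem _
    · have := hmin j (Finsupp.mem_support_iff.2 hj)
      exact orderFiltration_antitone (by lia) (mem_orderFiltration_order (b j))
  · rw [sub_add_cancel]
    exact coeff_order_eq_zero.not.2 (Finsupp.mem_support_iff.1 hi)

theorem cofg_range_formalAdjoint [CharZero F] {b : ℕ →₀ F⸨X⸩} (hb : b ≠ 0) :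
    (LinearMap.range (formalAdjoint b)).CoFG := by
  obtain ⟨c, hmem, i, hi⟩ := exists_forall_mem_orderFiltration_and_coeff_ne_zero hb
  refine (hasIndicialFunction_formalAdjoint hmem).cofg_range ?_
  have hinj : Function.Injective fun n : ℤ => ((n + c : ℤ) + 1 : F) :=
    (add_left_injective 1).comp (Int.cast_injective.comp (add_left_injective c))
  have hroots := Polynomial.rootSet_finite (indicialPolynomial b c) F
  refine (hroots.preimage hinj.injOn).subset fun n hn => ?_
  rw [Set.mem_preimage, Polynomial.mem_rootSet]
  exact ⟨indicialPolynomial_ne_zero hi, by simpa using hn⟩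

end FormalAdjoint

section Connection

/-- `D` satisfies the Leibniz rule over the operator `δ` on scalars: it is a connection in the
direction `δ`. -/
def IsConnection {K E : Type*} [AddCommGroup E] [SMul K E] (δ : K → K) (D : E → E) : Prop :=
  ∀ (f : K) (e : E), D (f • e) = δ f • e + f • D e

namespace IsConnection

variable {F K E : Type*} [Field F] [Field K] [AddCommGroup E] [Module F E] [Module K E]
  [SMul F K] [IsScalarTower F K E]

/-- A connection, as a linear map over a field of scalars on which `δ` vanishes. -/
def toLinearMap {δ : K → K} {D : E →+ E} (hD : IsConnection δ D)
    (hconst : ∀ a : F, δ (a • 1) = 0) : E →ₗ[F] E where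
  __ := D
  map_smul' a e := by
    have h := hD (a • 1) e
    rw [hconst, zero_smul, zero_add, smul_one_smul, smul_one_smul] at h
    exact h

theorem linearIndependent_of_horizontal {δ : K → K} {D : E →ₗ[F] E} (hD : IsConnection δ D)
    (hconst : ∀ f, δ f = 0 → ∃ a : F, a • (1 : K) = f) {ι : Type*} {w : ι → E}
    (hw : ∀ i, D (w i) = 0) (hindep : LinearIndependent F w) : LinearIndependent K w := by
  classical
  refine linearIndependent_iff_finset_linearIndependent.2 fun s => ?_
  change LinearIndepOn K w s
  induction s using Finset.induction_on with
  | empty => simpa only [Finset.coe_empty] using linearIndepOn_empty K w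
  | insert j s hj ih =>
    rw [Finset.coe_insert]
    refine ih.insert fun hmem => ?_
    obtain ⟨c, hc⟩ := (Submodule.mem_span_image_finset_iff_exists_fun K).1 hmem
    -- Differentiating the relation kills `w j` and differentiates the coefficients.
    have hderiv : ∑ i : s, δ (c i) • w i = 0 := by
      simpa only [map_sum, hD _ _, hw, smul_zero, add_zero] using congrArg D hc
    have hzero (i : s) : δ (c i) = 0 := Fintype.linearIndependent_iff.1 ih _ hderiv i
    choose a ha using fun i => hconst _ (hzero i)
    refine hindep.notMem_span_image hj
      ((Submodule.mem_span_image_finset_iff_exists_fun F).2 ⟨a, hc ▸ ?_⟩)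
    exact Finset.sum_congr rfl fun i _ => by rw [← ha i, smul_assoc, one_smul]

theorem finiteDimensional_ker_of_constants [FiniteDimensional K E] {δ : K → K} {D : E →ₗ[F] E}
    (hD : IsConnection δ D) (hconst : ∀ f, δ f = 0 → ∃ a : F, a • (1 : K) = f) :
    FiniteDimensional F (LinearMap.ker D) := by
  let b := Module.Basis.ofVectorSpace F (LinearMap.ker D)
  have hindep : LinearIndependent F fun i => (b i : E) :=
    b.linearIndependent.map' (LinearMap.ker D).subtype (Submodule.ker_subtype _)
  have := (hD.linearIndependent_of_horizontal hconst (fun i => (b i).2) hindep).finite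
  exact Module.Finite.of_basis b

end IsConnection

theorem exists_ne_zero_sum_smul_pow_eq_zero {R K E : Type*} [Semiring R] [DivisionRing K]
    [AddCommGroup E] [Module R E] [Module K E] [FiniteDimensional K E] (D : Module.End R E)
    (e : E) : ∃ b : ℕ →₀ K, b ≠ 0 ∧ b.sum (fun i g => g • (D ^ i) e) = 0 := by
  have hdep : ¬ LinearIndependent K fun i : ℕ => (D ^ i) e := fun h => h.finite.false
  rw [linearIndependent_iff] at hdep
  push Not at hdep
  obtain ⟨b, hb, hb0⟩ := hdep
  exact ⟨b, hb0, hb⟩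

end Connection

section LaurentSeriesConnection

open HahnSeries
open scoped LaurentSeries

theorem coeff_derivative {R : Type*} [CommRing R] (f : R⸨X⸩) (m : ℤ) :
    (LaurentSeries.derivative R f).coeff m = (m + 1 : R) * f.coeff (m + 1) := by
  simpa only [pow_one, ascPochhammer_one, Polynomial.eval_X, Nat.cast_one] using
    derivative_pow_coeff_eq_eval_ascPochhammer 1 f m

theorem derivative_smul_one {R : Type*} [CommRing R] (a : R) :
    LaurentSeries.derivative R (a • (1 : R⸨X⸩)) = 0 := by
  ext m
  rw [coeff_derivative, coeff_smul, coeff_one, coeff_zero]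
  split_ifs with hm
  · rw [← Int.cast_one (R := R), ← Int.cast_add, hm, Int.cast_zero, zero_mul]
  · rw [smul_zero, mul_zero]

variable {F : Type*} [Field F]

theorem exists_smul_one_eq_of_derivative_eq_zero [CharZero F] {f : F⸨X⸩}
    (hf : LaurentSeries.derivative F f = 0) : ∃ a : F, a • (1 : F⸨X⸩) = f := by
  refine ⟨f.coeff 0, ?_⟩
  rw [← C_mul_eq_smul, mul_one]
  ext m
  rcases eq_or_ne m 0 with rfl | hm
  · exact coeff_single_same 0 _
  · have hcoeff := coeff_derivative f (m - 1)
    rw [hf, coeff_zero, sub_add_cancel, Int.cast_sub, Int.cast_one, sub_add_cancel, zero_eq_mul]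
      at hcoeff
    rw [C_apply, coeff_single_of_ne hm, hcoeff.resolve_left (Int.cast_ne_zero.2 hm)]

namespace IsConnection

variable {E : Type*} [AddCommGroup E] [Module F E] [Module F⸨X⸩ E] {D : E →ₗ[F] E}

theorem smul_pow_sub_mem_range (hD : IsConnection (K := F⸨X⸩) (LaurentSeries.derivative F) D)
    (i : ℕ) (f : F⸨X⸩) (e : E) :
    f • (D ^ i) e - ((-1 : ℤ) ^ i • (LaurentSeries.derivative F ^ i) f) • e ∈
      LinearMap.range D := by
  induction i generalizing e with
  | zero => simp only [pow_zero, Module.End.one_apply, one_smul, sub_self, zero_mem]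
  | succ i ih =>
    rw [← sub_add_sub_cancel _ (((-1 : ℤ) ^ i • (LaurentSeries.derivative F ^ i) f) • D e)]
    refine add_mem ?_ ⟨((-1 : ℤ) ^ i • (LaurentSeries.derivative F ^ i) f) • e, ?_⟩
    · rw [pow_succ, Module.End.mul_apply]
      exact ih (D e)
    · rw [hD _ _, map_zsmul, pow_succ' (LaurentSeries.derivative F), Module.End.mul_apply,
        pow_succ, mul_neg_one, neg_smul, neg_smul, sub_neg_eq_add, add_comm]

theorem formalAdjoint_smul_mem_range (hD : IsConnection (K := F⸨X⸩) (LaurentSeries.derivative F) D)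
    {b : ℕ →₀ F⸨X⸩} {e : E} (he : b.sum (fun i g => g • (D ^ i) e) = 0) (f : F⸨X⸩) :
    formalAdjoint b f • e ∈ LinearMap.range D := by
  have hsum : ∑ i ∈ b.support, (b i * f) • (D ^ i) e = 0 := by
    simp only [mul_comm _ f, mul_smul, ← Finset.smul_sum]
    exact (congrArg (f • ·) he).trans (smul_zero f)
  have hadj : formalAdjoint b f • e = ∑ i ∈ b.support,
      (((-1 : ℤ) ^ i • (LaurentSeries.derivative F ^ i) (b i * f)) • e -
        (b i * f) • (D ^ i) e) := by
    rw [Finset.sum_sub_distrib, hsum, sub_zero, formalAdjoint_apply, Finsupp.sum,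
      Finset.sum_smul]
  rw [hadj]
  exact sum_mem fun i _ => sub_mem_comm_iff.1 (hD.smul_pow_sub_mem_range i (b i * f) e)

variable [IsScalarTower F F⸨X⸩ E] [CharZero F] [FiniteDimensional F⸨X⸩ E]

theorem fg_range_mkQ_comp_toSpanSingleton
    (hD : IsConnection (K := F⸨X⸩) (LaurentSeries.derivative F) D) (e : E) :
    (LinearMap.range ((LinearMap.range D).mkQ ∘ₗ
      (LinearMap.toSpanSingleton F⸨X⸩ E e).restrictScalars F)).FG := by
  obtain ⟨b, hb, he⟩ := exists_ne_zero_sum_smul_pow_eq_zero (K := F⸨X⸩) D e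
  have := cofg_range_formalAdjoint hb
  have hle : LinearMap.range (formalAdjoint b) ≤ (LinearMap.range D).comap
      ((LinearMap.toSpanSingleton F⸨X⸩ E e).restrictScalars F) := by
    rintro _ ⟨f, rfl⟩
    exact hD.formalAdjoint_smul_mem_range he f
  rw [← Submodule.mapQ_mkQ _ _ _ (h := hle), LinearMap.range_comp, Submodule.range_mkQ]
  exact Module.Finite.fg_top.map _

theorem cofg_range (hD : IsConnection (K := F⸨X⸩) (LaurentSeries.derivative F) D) :
    (LinearMap.range D).CoFG := by
  let b := Module.finBasis F⸨X⸩ E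
  let W := ⨆ j, LinearMap.range ((LinearMap.range D).mkQ ∘ₗ
    (LinearMap.toSpanSingleton F⸨X⸩ E (b j)).restrictScalars F)
  have htop : W = ⊤ := by
    rw [eq_top_iff, ← Submodule.range_mkQ]
    rintro _ ⟨e, rfl⟩
    rw [← b.sum_repr e, map_sum]
    exact sum_mem fun j _ => Submodule.mem_iSup_of_mem j ⟨b.repr e j, rfl⟩
  exact ⟨htop ▸ Submodule.fg_iSup _ fun j => hD.fg_range_mkQ_comp_toSpanSingleton (b j)⟩

theorem finiteDimensional_ker (hD : IsConnection (K := F⸨X⸩) (LaurentSeries.derivative F) D) :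
    FiniteDimensional F (LinearMap.ker D) :=
  hD.finiteDimensional_ker_of_constants fun _ => exists_smul_one_eq_of_derivative_eq_zero

end IsConnection

end LaurentSeriesConnection

section Homology

variable {R A B C : Type*} [Ring R] [AddCommGroup A] [AddCommGroup B] [AddCommGroup C]
  [Module R A] [Module R B] [Module R C]

/-- The homology of `A → B → C` at `B`, as a submodule of `B ⧸ range f` so that finite generation
passes between homologies through the ambient quotients; `g ∘ f = 0` is not part of the data. -/
def homologySubmodule (f : A →ₗ[R] B) (g : B →ₗ[R] C) : Submodule R (B ⧸ LinearMap.range f) :=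
  (LinearMap.ker g).map (LinearMap.range f).mkQ

theorem finite_ker_quotient_of_fg_homologySubmodule {f : A →ₗ[R] B} {g : B →ₗ[R] C}
    (h : (homologySubmodule f g).FG) :
    Module.Finite R
      (LinearMap.ker g ⧸ (LinearMap.range f).comap (LinearMap.ker g).subtype) := by
  let φ := (LinearMap.range f).mkQ ∘ₗ (LinearMap.ker g).subtype
  have hker : LinearMap.ker φ = (LinearMap.range f).comap (LinearMap.ker g).subtype := by
    rw [LinearMap.ker_comp, Submodule.ker_mkQ]
  have hrange : LinearMap.range φ = homologySubmodule f g := by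
    rw [LinearMap.range_comp, Submodule.range_subtype, homologySubmodule]
  rw [← hker]
  have : Module.Finite R (LinearMap.range φ) := Module.Finite.iff_fg.2 (hrange ▸ h)
  exact Module.Finite.equiv φ.quotKerEquivRange.symm

theorem fg_ker_of_fg_homologySubmodule_zero {g : B →ₗ[R] C}
    (h : (homologySubmodule (0 : A →ₗ[R] B) g).FG) : (LinearMap.ker g).FG := by
  refine Submodule.fg_of_fg_map_injective _ (LinearMap.ker_eq_bot.1 ?_) h
  rw [Submodule.ker_mkQ, LinearMap.range_zero]

variable [IsNoetherianRing R]

theorem fg_homologySubmodule_of_lift {A' B' C' : Type*} [AddCommGroup A'] [AddCommGroup B']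
    [AddCommGroup C'] [Module R A'] [Module R B'] [Module R C'] {f : A →ₗ[R] B} {g : B →ₗ[R] C}
    {f' : A' →ₗ[R] B'} {g' : B' →ₗ[R] C'} (r : B' →ₗ[R] B)
    (hrange : LinearMap.range f' ≤ (LinearMap.range f).comap r)
    (hker : LinearMap.ker g ≤ (LinearMap.ker g').map r) (h : (homologySubmodule f' g').FG) :
    (homologySubmodule f g).FG := by
  refine (h.map (Submodule.mapQ _ _ r hrange)).of_le ?_
  rw [homologySubmodule, homologySubmodule, ← Submodule.map_comp, Submodule.mapQ_mkQ,
    Submodule.map_comp]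
  exact Submodule.map_mono hker

theorem fg_homologySubmodule_of_exact {dA : A →ₗ[R] A} {dB : B →ₗ[R] B} {dC : C →ₗ[R] C}
    {f : A →ₗ[R] B} {g : B →ₗ[R] C} (hf : f ∘ₗ dA = dB ∘ₗ f) (hg : g ∘ₗ dB = dC ∘ₗ g)
    (hexact : ∀ b ∈ LinearMap.ker dB, g b ∈ LinearMap.range dC →
      ∃ a ∈ LinearMap.ker dA, b - f a ∈ LinearMap.range dB)
    (hA : (homologySubmodule dA dA).FG) (hC : (homologySubmodule dC dC).FG) :
    (homologySubmodule dB dB).FG := by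
  have hrange_f : LinearMap.range dA ≤ (LinearMap.range dB).comap f := by
    rintro _ ⟨a, rfl⟩
    exact ⟨f a, (LinearMap.congr_fun hf a).symm⟩
  have hrange_g : LinearMap.range dB ≤ (LinearMap.range dC).comap g := by
    rintro _ ⟨b, rfl⟩
    exact ⟨g b, (LinearMap.congr_fun hg b).symm⟩
  refine Submodule.fg_of_fg_map_of_fg_inf_ker (Submodule.mapQ _ _ g hrange_g)
    (hC.of_le ?_) ((hA.map (Submodule.mapQ _ _ f hrange_f)).of_le ?_)
  · rintro _ ⟨_, ⟨b, hb, rfl⟩, rfl⟩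
    refine ⟨g b, ?_, rfl⟩
    rw [SetLike.mem_coe, LinearMap.mem_ker, ← LinearMap.comp_apply, ← hg, LinearMap.comp_apply,
      LinearMap.mem_ker.1 hb, map_zero]
  · rintro _ ⟨⟨b, hb, rfl⟩, hgb⟩
    obtain ⟨a, ha, hba⟩ := hexact b hb ((Submodule.Quotient.mk_eq_zero _).1 hgb)
    exact ⟨_, ⟨a, ha, rfl⟩, ((Submodule.Quotient.eq _).2 hba).symm⟩

end Homology

section Cone

variable {R A : Type*} [Ring R] [AddCommGroup A] [Module R A]

/-- The differential of the mapping cone of an endomorphism `T` of `(A, d)`; the sign convention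
is the one for `T` anticommuting with `d`. -/
def coneD (d T : A →ₗ[R] A) : A × A →ₗ[R] A × A :=
  (d ∘ₗ LinearMap.fst R A A).prod (d ∘ₗ LinearMap.snd R A A + T ∘ₗ LinearMap.fst R A A)

theorem coneD_apply (d T : A →ₗ[R] A) (x : A × A) : coneD d T x = (d x.1, d x.2 + T x.1) := rfl

theorem coneD_coneD {d T : A →ₗ[R] A} (hd : ∀ x, d (d x) = 0) (hdT : ∀ x, d (T x) = -T (d x))
    (x : A × A) : coneD d T (coneD d T x) = 0 := by
  simp only [coneD_apply, map_add, hd, hdT, zero_add, neg_add_cancel, Prod.mk_zero_zero]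

theorem fg_homologySubmodule_coneD [IsNoetherianRing R] {K Q : Type*} [AddCommGroup K]
    [AddCommGroup Q] [Module R K] [Module R Q] {d T : A →ₗ[R] A} (hd : ∀ x, d (d x) = 0)
    (hdT : ∀ x, d (T x) = -T (d x)) {dK : K →ₗ[R] K} {dQ : Q →ₗ[R] Q} {ι : K →ₗ[R] A}
    {π : A →ₗ[R] Q} (hιd : ι ∘ₗ dK = d ∘ₗ ι) (hπd : π ∘ₗ d = dQ ∘ₗ π)
    (hι : Function.Injective ι) (hιT : Function.Exact ι T) (hTπ : Function.Exact T π)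
    (hπ : Function.Surjective π) (hK : (homologySubmodule dK dK).FG)
    (hQ : (homologySubmodule dQ dQ).FG) :
    (homologySubmodule (coneD d T) (coneD d T)).FG := by
  replace hιd := LinearMap.congr_fun hιd
  replace hπd := LinearMap.congr_fun hπd
  simp only [LinearMap.comp_apply] at hιd hπd
  refine fg_homologySubmodule_of_exact (f := LinearMap.inl R A A ∘ₗ ι)
    (g := π ∘ₗ LinearMap.snd R A A) ?_ ?_ ?_ hK hQ
  · ext x <;> simp [coneD_apply, hιd, hιT.apply_apply_eq_zero]
  · ext x <;> simp [coneD_apply, hπd, hTπ.apply_apply_eq_zero]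
  · rintro ⟨a, b⟩ hab ⟨q, hq⟩
    obtain ⟨ha, hb⟩ : d a = 0 ∧ d b + T a = 0 := Prod.ext_iff.1 hab
    obtain ⟨b', rfl⟩ := hπ q
    obtain ⟨a', ha'⟩ : b - d b' ∈ Set.range T := (hTπ _).1 (by
      rw [map_sub, hπd, hq, LinearMap.comp_apply, LinearMap.snd_apply, sub_self])
    obtain ⟨x, hx⟩ : a - d a' ∈ Set.range ι := (hιT _).1 (by
      rw [map_sub, ← neg_eq_iff_eq_neg.2 (hdT a'), sub_neg_eq_add, ha', map_sub, hd, sub_zero,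
        add_comm, hb])
    refine ⟨x, hι ?_, ⟨(a', b'), ?_⟩⟩
    · rw [hιd, hx, map_sub, ha, hd, sub_self, map_zero]
    · simp [coneD_apply, hx, ha']

end Cone

section Koszul

variable {R E : Type*} [Ring R] [AddCommGroup E] [Module R E] {n : ℕ}

/-- The Koszul differential of a family of operators on `E` in all degrees at once: `φ N` is the
coefficient of `⋀ i ∈ N, dtᵢ`. -/
def koszulD (D : Fin n → E →ₗ[R] E) : (Finset (Fin n) → E) →ₗ[R] (Finset (Fin n) → E) :=
  LinearMap.pi fun N => ∑ i ∈ N,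
    (-1 : ℤ) ^ (N.filter (· < i)).card • D i ∘ₗ LinearMap.proj (N.erase i)

theorem koszulD_apply (D : Fin n → E →ₗ[R] E) (φ : Finset (Fin n) → E) (N : Finset (Fin n)) :
    koszulD D φ N = ∑ i ∈ N, (-1 : ℤ) ^ (N.filter (· < i)).card • D i (φ (N.erase i)) := by
  simp only [koszulD, LinearMap.pi_apply, LinearMap.sum_apply, LinearMap.smul_apply,
    LinearMap.comp_apply, LinearMap.proj_apply]

theorem compLeft_comp_koszulD {E' : Type*} [AddCommGroup E'] [Module R E']
    {D : Fin n → E →ₗ[R] E} {D' : Fin n → E' →ₗ[R] E'} {g : E →ₗ[R] E'}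
    (hg : ∀ i, g ∘ₗ D i = D' i ∘ₗ g) :
    g.compLeft (Finset (Fin n)) ∘ₗ koszulD D = koszulD D' ∘ₗ g.compLeft (Finset (Fin n)) := by
  ext1 φ
  ext N
  have hg' (i : Fin n) (e : E) : g (D i e) = D' i (g e) := LinearMap.congr_fun (hg i) e
  simp only [LinearMap.comp_apply, LinearMap.compLeft_apply, koszulD_apply, Function.comp_apply,
    map_sum, map_zsmul, hg']

/-- The subsets of `Fin (n + 1)`, split into those without (`inl`) and with (`inr`) the last
element. -/
def finsetSuccEquiv (n : ℕ) : Finset (Fin n) ⊕ Finset (Fin n) ≃ Finset (Fin (n + 1)) where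
  toFun := Sum.elim (·.map Fin.castSuccEmb) fun N => insert (Fin.last n) (N.map Fin.castSuccEmb)
  invFun N :=
    if Fin.last n ∈ N then
      .inr (Finset.univ.filter fun i => i.castSucc ∈ N)
    else
      .inl (Finset.univ.filter fun i => i.castSucc ∈ N)
  left_inv := by rintro (N | N) <;> simp [Fin.castSucc_ne_last]
  right_inv N := by
    by_cases h : Fin.last n ∈ N <;> ext i <;> cases i using Fin.lastCases <;>
      simp [h, Fin.castSucc_ne_last]

theorem last_notMem_map_castSuccEmb (N : Finset (Fin n)) :
    Fin.last n ∉ N.map Fin.castSuccEmb := by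
  simp [Fin.castSucc_ne_last]

theorem card_filter_lt_map_castSuccEmb (N : Finset (Fin n)) (i : Fin n) :
    ((N.map Fin.castSuccEmb).filter (· < i.castSucc)).card = (N.filter (· < i)).card := by
  rw [Finset.filter_map, Finset.card_map]
  rfl

theorem card_filter_lt_insert_last (N : Finset (Fin (n + 1))) (i : Fin (n + 1)) :
    ((insert (Fin.last n) N).filter (· < i)).card = (N.filter (· < i)).card := by
  rw [Finset.filter_insert, if_neg (not_lt.2 (Fin.le_last i))]

theorem card_filter_lt_last_map_castSuccEmb (N : Finset (Fin n)) :
    ((N.map Fin.castSuccEmb).filter (· < Fin.last n)).card = N.card := by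
  rw [Finset.filter_true_of_mem fun i hi => ?_, Finset.card_map]
  exact Fin.lt_last_iff_ne_last.2 fun h => last_notMem_map_castSuccEmb N (h ▸ hi)

/-- The operator induced by `T` on forms, with the sign `(-1) ^ p` in degree `p`. -/
def signedCompLeft (n : ℕ) (T : E →ₗ[R] E) : (Finset (Fin n) → E) →ₗ[R] (Finset (Fin n) → E) :=
  LinearMap.pi fun N => (-1 : ℤ) ^ N.card • T ∘ₗ LinearMap.proj N

theorem signedCompLeft_apply (T : E →ₗ[R] E) (φ : Finset (Fin n) → E) (N : Finset (Fin n)) :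
    signedCompLeft n T φ N = (-1 : ℤ) ^ N.card • T (φ N) := rfl

theorem koszulD_signedCompLeft {D : Fin n → E →ₗ[R] E} {T : E →ₗ[R] E}
    (hT : ∀ i, Commute (D i) T) (φ : Finset (Fin n) → E) :
    koszulD D (signedCompLeft n T φ) = -signedCompLeft n T (koszulD D φ) := by
  ext N
  have hT' (i : Fin n) (e : E) : D i (T e) = T (D i e) := LinearMap.congr_fun (hT i) e
  simp only [Pi.neg_apply, signedCompLeft_apply, koszulD_apply, map_sum, map_zsmul, hT',
    Finset.smul_sum, ← Finset.sum_neg_distrib]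
  refine Finset.sum_congr rfl fun i hi => ?_
  rw [← Finset.card_erase_add_one hi, smul_comm, pow_succ, mul_neg_one, neg_smul, neg_neg]

/-- The splitting `φ + dt ∧ ψ ↦ (φ, ψ)` of forms in `n + 1` variables, `t` being the last. -/
def koszulSuccEquiv (R E : Type*) [Ring R] [AddCommGroup E] [Module R E] (n : ℕ) :
    (Finset (Fin (n + 1)) → E) ≃ₗ[R] (Finset (Fin n) → E) × (Finset (Fin n) → E) :=
  (LinearEquiv.funCongrLeft R E (finsetSuccEquiv n)).trans
    (LinearEquiv.sumArrowLequivProdArrow _ _ R E)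

theorem koszulSuccEquiv_fst_apply (φ : Finset (Fin (n + 1)) → E) (N : Finset (Fin n)) :
    (koszulSuccEquiv R E n φ).1 N = φ (N.map Fin.castSuccEmb) := rfl

theorem koszulSuccEquiv_snd_apply (φ : Finset (Fin (n + 1)) → E) (N : Finset (Fin n)) :
    (koszulSuccEquiv R E n φ).2 N = φ (insert (Fin.last n) (N.map Fin.castSuccEmb)) := rfl

theorem koszulSuccEquiv_koszulD (D : Fin (n + 1) → E →ₗ[R] E) (φ : Finset (Fin (n + 1)) → E) :
    koszulSuccEquiv R E n (koszulD D φ) =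
      coneD (koszulD fun i => D i.castSucc) (signedCompLeft n (D (Fin.last n)))
        (koszulSuccEquiv R E n φ) := by
  have herase (N : Finset (Fin n)) (i : Fin n) : (N.map Fin.castSuccEmb).erase i.castSucc =
      (N.erase i).map Fin.castSuccEmb := (Finset.map_erase Fin.castSuccEmb N i).symm
  refine Prod.ext (funext fun N => ?_) (funext fun N => ?_)
  · simp only [coneD_apply, koszulSuccEquiv_fst_apply, koszulD_apply, Finset.sum_map,
      Fin.coe_castSuccEmb, herase]
    exact Finset.sum_congr rfl fun i _ =>
      congrArg (fun m => (-1 : ℤ) ^ m • _) (card_filter_lt_map_castSuccEmb N i)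
  · simp only [coneD_apply, koszulSuccEquiv_fst_apply, koszulSuccEquiv_snd_apply, koszulD_apply,
      Pi.add_apply, Finset.sum_insert (last_notMem_map_castSuccEmb N), Finset.sum_map,
      Fin.coe_castSuccEmb, card_filter_lt_insert_last,
      card_filter_lt_last_map_castSuccEmb, signedCompLeft_apply,
      Finset.erase_insert (last_notMem_map_castSuccEmb N),
      Finset.erase_insert_of_ne (Fin.castSucc_ne_last _).symm, herase]
    rw [add_comm]
    exact congrArg (· + _) (Finset.sum_congr rfl fun i _ =>
      congrArg (fun m => (-1 : ℤ) ^ m • _) (card_filter_lt_map_castSuccEmb N i))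

theorem koszulD_koszulD {D : Fin n → E →ₗ[R] E} (hD : ∀ i j, Commute (D i) (D j))
    (φ : Finset (Fin n) → E) : koszulD D (koszulD D φ) = 0 := by
  induction n with
  | zero =>
    ext N
    simp only [koszulD_apply, Finset.eq_empty_of_isEmpty N, Finset.sum_empty, Pi.zero_apply]
  | succ n ih =>
    rw [← (koszulSuccEquiv R E n).map_eq_zero_iff, koszulSuccEquiv_koszulD,
      koszulSuccEquiv_koszulD]
    exact coneD_coneD (ih fun i j => hD _ _) (koszulD_signedCompLeft fun i => hD _ _) _

theorem exact_compLeft_signedCompLeft {A : Type*} [AddCommGroup A] [Module R A] {ι : A →ₗ[R] E}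
    {T : E →ₗ[R] E} (h : Function.Exact ι T) :
    Function.Exact (ι.compLeft (Finset (Fin n))) (signedCompLeft n T) := by
  intro φ
  have hzero : signedCompLeft n T φ = 0 ↔ ∀ N, T (φ N) = 0 := by
    simp only [funext_iff, signedCompLeft_apply, Pi.zero_apply,
      (isUnit_one.neg.pow _).smul_eq_zero]
  rw [hzero, forall_congr' fun N => h (φ N), ← LinearMap.coe_range, ← LinearMap.coe_range,
    LinearMap.range_compLeft]
  simp only [SetLike.mem_coe, Submodule.mem_pi, Set.mem_univ, true_implies]

theorem exact_signedCompLeft_compLeft {A : Type*} [AddCommGroup A] [Module R A] {π : E →ₗ[R] A}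
    {T : E →ₗ[R] E} (h : Function.Exact T π) :
    Function.Exact (signedCompLeft n T) (π.compLeft (Finset (Fin n))) := by
  intro φ
  constructor
  · intro hφ
    choose ψ hψ using fun N => (h (φ N)).1 (congrFun hφ N)
    refine ⟨fun N => (-1 : ℤ) ^ N.card • ψ N, funext fun N => ?_⟩
    rw [signedCompLeft_apply, map_zsmul, hψ, smul_smul, ← mul_pow, neg_mul_neg, one_mul, one_pow,
      one_smul]
  · rintro ⟨ψ, rfl⟩
    ext N
    simp only [LinearMap.compLeft_apply, Function.comp_apply, signedCompLeft_apply, map_zsmul,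
      h.apply_apply_eq_zero, smul_zero, Pi.zero_apply]

theorem fg_homologySubmodule_koszulD_succ [IsNoetherianRing R] {K Q : Type*} [AddCommGroup K]
    [AddCommGroup Q] [Module R K] [Module R Q] {D : Fin (n + 1) → E →ₗ[R] E}
    (hD : ∀ i j, Commute (D i) (D j)) {DK : Fin n → K →ₗ[R] K} {DQ : Fin n → Q →ₗ[R] Q}
    {ι : K →ₗ[R] E} {π : E →ₗ[R] Q} (hιD : ∀ i, ι ∘ₗ DK i = D i.castSucc ∘ₗ ι)
    (hπD : ∀ i, π ∘ₗ D i.castSucc = DQ i ∘ₗ π) (hι : Function.Injective ι)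
    (hιT : Function.Exact ι (D (Fin.last n))) (hTπ : Function.Exact (D (Fin.last n)) π)
    (hπ : Function.Surjective π) (hK : (homologySubmodule (koszulD DK) (koszulD DK)).FG)
    (hQ : (homologySubmodule (koszulD DQ) (koszulD DQ)).FG) :
    (homologySubmodule (koszulD D) (koszulD D)).FG := by
  have hcone := fg_homologySubmodule_coneD (koszulD_koszulD fun i j => hD i.castSucc j.castSucc)
    (koszulD_signedCompLeft fun i => hD i.castSucc (Fin.last n)) (compLeft_comp_koszulD hιD)
    (compLeft_comp_koszulD hπD) hι.comp_left (exact_compLeft_signedCompLeft hιT)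
    (exact_signedCompLeft_compLeft hTπ) hπ.comp_left hK hQ
  refine fg_homologySubmodule_of_lift (koszulSuccEquiv R E n).symm.toLinearMap ?_ ?_ hcone
  · rintro _ ⟨x, rfl⟩
    refine ⟨(koszulSuccEquiv R E n).symm x, (koszulSuccEquiv R E n).injective ?_⟩
    rw [koszulSuccEquiv_koszulD]
    simp only [LinearEquiv.coe_coe, LinearEquiv.apply_symm_apply]
  · intro φ hφ
    refine ⟨koszulSuccEquiv R E n φ, ?_, LinearEquiv.symm_apply_apply _ φ⟩
    rw [SetLike.mem_coe, LinearMap.mem_ker, ← koszulSuccEquiv_koszulD, LinearMap.mem_ker.1 hφ,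
      map_zero]

end Koszul

section FlatConnection

variable {k F E E' I : Type*} [Field k] [Field F] [AddCommGroup E] [Module k E]
  [Module F E] [AddCommGroup E'] [Module k E'] [Module F E'] {δ : I → F → F}
  {D : I → E →ₗ[k] E} {D' : I → E' →ₗ[k] E'}

/-- A flat connection over a family of derivations, given by its covariant derivatives. -/
structure IsFlatConnection (δ : I → F → F) (D : I → E →ₗ[k] E) : Prop where
  leibniz : ∀ i, IsConnection (δ i) (D i)
  flat : ∀ i j, Commute (D i) (D j)

namespace IsFlatConnection

theorem of_injective (h : IsFlatConnection δ D) {f : E' →ₗ[F] E} (hf : Function.Injective f)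
    (hfD : ∀ i e, f (D' i e) = D i (f e)) : IsFlatConnection δ D' where
  leibniz i a e := hf (by simp only [hfD, map_add, map_smul, h.leibniz i a (f e)])
  flat i j := LinearMap.ext fun e => hf (by
    simpa only [Module.End.mul_apply, hfD] using LinearMap.congr_fun (h.flat i j) (f e))

theorem of_surjective (h : IsFlatConnection δ D) {f : E →ₗ[F] E'} (hf : Function.Surjective f)
    (hfD : ∀ i e, f (D i e) = D' i (f e)) : IsFlatConnection δ D' where
  leibniz i a := hf.forall.2 fun e => by
    rw [← map_smul, ← hfD, ← hfD, h.leibniz i a e, map_add, map_smul, map_smul]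
  flat i j := LinearMap.ext <| hf.forall.2 fun e => by
    simpa only [Module.End.mul_apply, hfD] using congrArg f (LinearMap.congr_fun (h.flat i j) e)

end IsFlatConnection

end FlatConnection

section HasFiniteCohomology

variable {k F : Type*} [Field k] [Field F] [Algebra k F] {n : ℕ} {δ : Fin n → F → F}

/-- Every flat connection over `δ` on a finite-dimensional `F`-vector space has finite-dimensional
de Rham cohomology over `k`. -/
def HasFiniteCohomology (k : Type*) {F : Type*} [Field k] [Field F] [Algebra k F] {n : ℕ}
    (δ : Fin n → F → F) : Prop :=
  ∀ (E : Type v) [AddCommGroup E] [Module F E] [FiniteDimensional F E] [Module k E]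
    [IsScalarTower k F E] (D : Fin n → E →ₗ[k] E), IsFlatConnection δ D →
    (homologySubmodule (koszulD D) (koszulD D)).FG

namespace HasFiniteCohomology

theorem of_isEmpty_of_finite [FiniteDimensional k F] {δ : Fin 0 → F → F} :
    HasFiniteCohomology.{v} k δ := fun E _ _ _ _ _ D _ => by
  have : FiniteDimensional k E := FiniteDimensional.trans k F E
  exact IsNoetherian.noetherian _

theorem fg_homologySubmodule_succ (h : HasFiniteCohomology.{v} k δ) {E : Type v} [AddCommGroup E]
    [Module F E] [Module k E] [IsScalarTower k F E] {D : Fin (n + 1) → E →ₗ[k] E}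
    (hflat : ∀ i j, Commute (D i) (D j)) (hleibniz : ∀ i, IsConnection (δ i) (D i.castSucc))
    {T : E →ₗ[F] E} (hT : T.restrictScalars k = D (Fin.last n))
    [FiniteDimensional F (LinearMap.ker T)] [FiniteDimensional F (E ⧸ LinearMap.range T)] :
    (homologySubmodule (koszulD D) (koszulD D)).FG := by
  have hbase : IsFlatConnection δ fun i : Fin n => D i.castSucc := ⟨hleibniz, fun i j => hflat _ _⟩
  have hTD (i : Fin n) (e : E) : T (D i.castSucc e) = D i.castSucc (T e) := by
    have := LinearMap.congr_fun (hflat (Fin.last n) i.castSucc) e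
    rwa [← hT] at this
  have hker (i : Fin n) (e : E) (he : e ∈ (LinearMap.ker T).restrictScalars k) :
      D i.castSucc e ∈ (LinearMap.ker T).restrictScalars k := by
    rw [Submodule.restrictScalars_mem, LinearMap.mem_ker, hTD, LinearMap.mem_ker.1 he, map_zero]
  have hrange (i : Fin n) : (LinearMap.range T).restrictScalars k ≤
      ((LinearMap.range T).restrictScalars k).comap (D i.castSucc) := by
    rintro _ ⟨e, rfl⟩
    exact ⟨D i.castSucc e, hTD i e⟩
  let DK (i : Fin n) : LinearMap.ker T →ₗ[k] LinearMap.ker T := (D i.castSucc).restrict (hker i)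
  let DQ (i : Fin n) : (E ⧸ LinearMap.range T) →ₗ[k] E ⧸ LinearMap.range T :=
    (Submodule.Quotient.restrictScalarsEquiv k (LinearMap.range T)).conj
      (Submodule.mapQ _ _ (D i.castSucc) (hrange i))
  have hιD (i : Fin n) : (LinearMap.ker T).subtype.restrictScalars k ∘ₗ DK i =
      D i.castSucc ∘ₗ (LinearMap.ker T).subtype.restrictScalars k := rfl
  have hπD (i : Fin n) : (LinearMap.range T).mkQ.restrictScalars k ∘ₗ D i.castSucc =
      DQ i ∘ₗ (LinearMap.range T).mkQ.restrictScalars k := rfl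
  have hDK : IsFlatConnection δ DK := hbase.of_injective (Submodule.injective_subtype _)
    fun i => LinearMap.congr_fun (hιD i)
  have hDQ : IsFlatConnection δ DQ := hbase.of_surjective (LinearMap.range T).mkQ_surjective
    fun i => LinearMap.congr_fun (hπD i)
  have hKT : Function.Exact (LinearMap.ker T).subtype (D (Fin.last n)) := by
    rw [← hT]
    exact T.exact_subtype_ker_map
  have hTQ : Function.Exact (D (Fin.last n)) (LinearMap.range T).mkQ := by
    rw [← hT]
    exact T.exact_map_mkQ_range
  exact fg_homologySubmodule_koszulD_succ hflat hιD hπD (LinearMap.ker T).injective_subtype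
    hKT hTQ (LinearMap.range T).mkQ_surjective (h _ DK hDK) (h _ DQ hDQ)

end HasFiniteCohomology

end HasFiniteCohomology

section IteratedLaurentSeries

theorem coeffExt_C {F : Type u} [NonAssocSemiring F] (d : F → F) (hd : d 0 = 0) (a : F) :
    coeffExt d hd (HahnSeries.C a) = HahnSeries.C (d a) := by
  ext m
  change d ((HahnSeries.C a : LaurentSeries F).coeff m) = _
  rcases eq_or_ne m 0 with rfl | hm
  · rw [HahnSeries.C_apply, HahnSeries.C_apply, HahnSeries.coeff_single_same,
      HahnSeries.coeff_single_same]
  · rw [HahnSeries.C_apply, HahnSeries.C_apply, HahnSeries.coeff_single_of_ne hm,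
      HahnSeries.coeff_single_of_ne hm, hd]

theorem algebraMap_laurentSeries_eq_C {k F : Type*} [CommSemiring k] [CommSemiring F]
    [Algebra k F] (r : k) :
    algebraMap k (LaurentSeries F) r = HahnSeries.C (algebraMap k F r) := by
  change HahnSeries.ofPowerSeries ℤ F (algebraMap k (PowerSeries F) r) = _
  rw [PowerSeries.algebraMap_apply, HahnSeries.ofPowerSeries_C]

theorem HasFiniteCohomology.laurentSeries {k F : Type*} [Field k] [Field F] [CharZero F]
    [Algebra k F] {n : ℕ} {δ : Fin n → F → F} (h : HasFiniteCohomology.{v} k δ)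
    {δ' : Fin (n + 1) → LaurentSeries F → LaurentSeries F}
    (hC : ∀ i a, δ' i.castSucc (HahnSeries.C a) = HahnSeries.C (δ i a))
    (hlast : ∀ f, δ' (Fin.last n) f = LaurentSeries.derivative F f) :
    HasFiniteCohomology.{v} k δ' := by
  intro E _ _ _ _ _ D hD
  let _ : Module F E := Module.compHom E (HahnSeries.C : F →+* LaurentSeries F)
  have smul_eq (a : F) (e : E) : a • e = (HahnSeries.C a : LaurentSeries F) • e := rfl
  have : IsScalarTower F (LaurentSeries F) E := ⟨fun a f e => by
    rw [smul_eq, ← HahnSeries.C_mul_eq_smul, mul_smul]⟩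
  have : IsScalarTower k F E := ⟨fun r a e => by
    rw [Algebra.smul_def, mul_smul, smul_eq, ← algebraMap_laurentSeries_eq_C, algebraMap_smul]⟩
  have hleibniz (i : Fin n) : IsConnection (δ i) (D i.castSucc) := fun a e => by
    rw [smul_eq, hD.leibniz, hC]
    rfl
  have hlast_conn : IsConnection (LaurentSeries.derivative F) (D (Fin.last n)).toAddMonoidHom :=
    fun f e => (hD.leibniz (Fin.last n) f e).trans (by rw [hlast]; rfl)
  let T : E →ₗ[F] E := hlast_conn.toLinearMap derivative_smul_one
  have hT : IsConnection (LaurentSeries.derivative F) T := hlast_conn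
  have := hT.finiteDimensional_ker
  have : FiniteDimensional F (E ⧸ LinearMap.range T) := hT.cofg_range
  exact h.fg_homologySubmodule_succ hD.flat hleibniz (T := T) rfl

theorem pder_zero (k : Type u) [Field k] (n : ℕ) (i : Fin n) : pder k n i 0 = 0 :=
  ((FnPkg k n).2.2.2.1 i).2

theorem pder_castSucc (k : Type u) [Field k] (n : ℕ) (i : Fin n) (f : LaurentSeries (Fn k n)) :
    pder k (n + 1) i.castSucc f = coeffExt (pder k n i) (pder_zero k n i) f :=
  congrFun (congrArg Subtype.val (Fin.lastCases_castSucc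
    (motive := fun _ => {f : LaurentSeries (Fn k n) → LaurentSeries (Fn k n) // f 0 = 0})
    (last := ⟨fun y => LaurentSeries.derivative (Fn k n) (V := Fn k n) y, map_zero _⟩)
    (cast := fun j => ⟨coeffExt (pder k n j) (pder_zero k n j),
      HahnSeries.ext (funext fun _ => pder_zero k n j)⟩) i)) f

theorem pder_last (k : Type u) [Field k] (n : ℕ) (f : LaurentSeries (Fn k n)) :
    pder k (n + 1) (Fin.last n) f = LaurentSeries.derivative (Fn k n) f :=
  congrFun (congrArg Subtype.val (Fin.lastCases_last
    (motive := fun _ => {f : LaurentSeries (Fn k n) → LaurentSeries (Fn k n) // f 0 = 0})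
    (last := ⟨fun y => LaurentSeries.derivative (Fn k n) (V := Fn k n) y, map_zero _⟩)
    (cast := fun j => ⟨coeffExt (pder k n j) (pder_zero k n j),
      HahnSeries.ext (funext fun _ => pder_zero k n j)⟩))) f

theorem hasFiniteCohomology_pder (k : Type u) [Field k] [CharZero k] (n : ℕ) :
    HasFiniteCohomology.{v} k (pder k n) := by
  induction n with
  | zero =>
    have : FiniteDimensional k (Fn k 0) := inferInstanceAs (FiniteDimensional k k)
    exact HasFiniteCohomology.of_isEmpty_of_finite
  | succ n ih =>
    have : CharZero (Fn k n) :=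
      charZero_of_injective_algebraMap (algebraMap k (Fn k n)).injective
    refine HasFiniteCohomology.laurentSeries (F := Fn k n) (δ' := pder k (n + 1)) ih
      (fun i a => ?_) (pder_last k n)
    exact (pder_castSucc k n i _).trans (coeffExt_C _ _ a)

end IteratedLaurentSeries

section DeRham

variable {k : Type u} [Field k] {n : ℕ} {E : Type v} [AddCommGroup E] [Module k E]
  {D : Fin n → E →ₗ[k] E}

/-- The projection of inhomogeneous forms to forms of degree `p`. -/
def degreePart (k : Type u) [Field k] (n : ℕ) (E : Type v) [AddCommGroup E] [Module k E] (p : ℕ) :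
    (Finset (Fin n) → E) →ₗ[k] deRhamPiece n E p :=
  LinearMap.funLeft k E Subtype.val

theorem degreePart_koszulD (p : ℕ) (φ : Finset (Fin n) → E) :
    degreePart k n E (p + 1) (koszulD D φ) = deRhamD k n E D p (degreePart k n E p φ) := by
  ext N
  exact (koszulD_apply D φ N).trans (Finset.sum_attach _ _).symm

theorem degreePart_zero_koszulD (φ : Finset (Fin n) → E) :
    degreePart k n E 0 (koszulD D φ) = 0 := by
  ext N
  refine (koszulD_apply D φ N).trans ?_
  rw [Finset.card_eq_zero.1 N.2, Finset.sum_empty, Pi.zero_apply]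

theorem ker_deRhamD_le_map_degreePart (p : ℕ) :
    LinearMap.ker (deRhamD k n E D p) ≤
      (LinearMap.ker (koszulD D)).map (degreePart k n E p) := by
  intro x hx
  let φ : Finset (Fin n) → E := Function.extend Subtype.val x 0
  have hφ : degreePart k n E p φ = x :=
    funext (Subtype.val_injective.extend_apply x _)
  have hφ_eq_zero {N : Finset (Fin n)} (hN : N.card ≠ p) : φ N = 0 :=
    Function.extend_apply' x _ N fun ⟨M, hM⟩ => hN (hM ▸ M.2)
  refine ⟨φ, ?_, hφ⟩
  ext N
  by_cases hN : N.card = p + 1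
  · have hdφ : degreePart k n E (p + 1) (koszulD D φ) = 0 := by
      rw [degreePart_koszulD, hφ, hx]
    exact congrFun hdφ ⟨N, hN⟩
  · rw [koszulD_apply]
    refine Finset.sum_eq_zero fun i hi => ?_
    have := Finset.card_erase_add_one hi
    rw [hφ_eq_zero (by omega), map_zero, smul_zero]

theorem fg_homologySubmodule_zero_deRhamD (h : (homologySubmodule (koszulD D) (koszulD D)).FG) :
    (homologySubmodule (0 : E →ₗ[k] deRhamPiece n E 0) (deRhamD k n E D 0)).FG := by
  refine fg_homologySubmodule_of_lift (degreePart k n E 0) ?_ (ker_deRhamD_le_map_degreePart 0) h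
  rintro _ ⟨φ, rfl⟩
  exact ⟨0, (degreePart_zero_koszulD φ).symm⟩

theorem fg_homologySubmodule_deRhamD (h : (homologySubmodule (koszulD D) (koszulD D)).FG) (p : ℕ) :
    (homologySubmodule (deRhamD k n E D p) (deRhamD k n E D (p + 1))).FG := by
  refine fg_homologySubmodule_of_lift (degreePart k n E (p + 1)) ?_
    (ker_deRhamD_le_map_degreePart (p + 1)) h
  rintro _ ⟨φ, rfl⟩
  exact ⟨degreePart k n E p φ, (degreePart_koszulD p φ).symm⟩

end DeRham

/-- Let `(E, ∇)` be a flat connection on the `n`-dimensional local field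
`F_n = k((t₁))⋯((t_n))` (char k = 0), given by commuting operators `∇₁, …, ∇_n` satisfying
the Leibniz rule with respect to the partial derivatives `∂/∂tᵢ`.  Then every de Rham
cohomology group `H^i_∇(E)` of the complex `E → E ⊗ Ω¹ → ⋯ → E ⊗ Ω^n` is a
finite-dimensional `k`-vector space. -/
theorem deRham_cohomology_finiteDimensional
    (k : Type u) [Field k] [CharZero k] (n : ℕ)
    (E : Type v) [AddCommGroup E] [Module (Fn k n) E]
    [FiniteDimensional (Fn k n) E]
    [Module k E] [IsScalarTower k (Fn k n) E]
    (Dop : Fin n → (E →ₗ[k] E))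
    (leibniz : ∀ (i : Fin n) (f : Fn k n) (e : E),
      Dop i (f • e) = pder k n i f • e + f • Dop i e)
    (flat : ∀ i j : Fin n, (Dop i).comp (Dop j) = (Dop j).comp (Dop i)) :
    FiniteDimensional k ↥(LinearMap.ker (deRhamD k n E Dop 0)) ∧
    ∀ i : ℕ, FiniteDimensional k
      (↥(LinearMap.ker (deRhamD k n E Dop (i + 1))) ⧸
        (LinearMap.range (deRhamD k n E Dop i)).comap
          (LinearMap.ker (deRhamD k n E Dop (i + 1))).subtype) := by
  have hfg : (homologySubmodule (koszulD Dop) (koszulD Dop)).FG :=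
    hasFiniteCohomology_pder k n E Dop ⟨leibniz, flat⟩
  refine ⟨?_, fun i => ?_⟩
  · exact Module.Finite.iff_fg.2
      (fg_ker_of_fg_homologySubmodule_zero (fg_homologySubmodule_zero_deRhamD hfg))
  · exact finite_ker_quotient_of_fg_homologySubmodule (fg_homologySubmodule_deRhamD hfg i)
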